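/- Let g be an n-Filippov algebra over K with n > 2 and dim_K g ≥ n. If _nH^Lie_k(g;K) = 0 for all k ≥ 0, then _nHL_k(g;K) = 0 for all k ≥ 0. -/

import Mathlib

open scoped TensorProduct
open PiTensorProduct

/-- The pure wedge `a₁ ∧ … ∧ a_m` as an element of the `m`-th exterior power `⋀[K]^m g`. -/
noncomputable def wedge (K : Type) [Field K] {g : Type} [AddCommGroup g] [Module K g] {m : ℕ}
    (a : Fin m → g) : ⋀[K]^m g :=
  ⟨ExteriorAlgebra.ιMulti K m a, ExteriorAlgebra.ιMulti_range K m ⟨a, rfl⟩⟩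

/-- Quotient of a submodule `Z` (the cycles) by a submodule `B` of it (the boundaries). -/
def HqOf (K : Type) [Field K] (N : Type) [AddCommGroup N] [Module K N]
    (Z : Submodule K N) (B : Submodule K Z) : Type := Z ⧸ B

/-- Cycles in degree `k` of a nonnegatively graded chain complex (in degree `0` everything
is a cycle). -/
def cyclesC (K : Type) [Field K] (C : ℕ → Type) [∀ k, AddCommGroup (C k)]
    [∀ k, Module K (C k)] (d : ∀ k, C (k+1) →ₗ[K] C k) : ∀ k, Submodule K (C k)
  | 0 => ⊤
  | (k+1) => LinearMap.ker (d k)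

/-- Boundaries in degree `k`, as a submodule of the cycles. -/
def boundariesC (K : Type) [Field K] (C : ℕ → Type) [∀ k, AddCommGroup (C k)]
    [∀ k, Module K (C k)] (d : ∀ k, C (k+1) →ₗ[K] C k) (k : ℕ) :
    Submodule K (cyclesC K C d k) :=
  Submodule.comap (cyclesC K C d k).subtype (LinearMap.range (d k))

/-- Homology in degree `k` of a nonnegatively graded chain complex. -/
def homologyC (K : Type) [Field K] (C : ℕ → Type) [∀ k, AddCommGroup (C k)]
    [∀ k, Module K (C k)] (d : ∀ k, C (k+1) →ₗ[K] C k) (k : ℕ) : Type :=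
  HqOf K (C k) (cyclesC K C d k) (boundariesC K C d k)

namespace LodayAux

section tower
variable {K : Type} [Field K] {D : Type} [AddCommGroup D] [Module K D]
  {C : ℕ → Type} [∀ k, AddCommGroup (C k)] [∀ k, Module K (C k)]
  (e : ∀ k, (C k ⊗[K] D) ≃ₗ[K] C (k+1))

/-- append a letter on the right -/
noncomputable def app (k : ℕ) : C k →ₗ[K] D →ₗ[K] C (k+1) :=
  (TensorProduct.mk K (C k) D).compr₂ (e k).toLinearMap

/-- define a linear map on `C (k+1)` by its values on `app x h` -/
noncomputable def lft {X : Type} [AddCommGroup X] [Module K X] (k : ℕ)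
    (f : C k →ₗ[K] D →ₗ[K] X) : C (k+1) →ₗ[K] X :=
  (TensorProduct.lift f) ∘ₗ (e k).symm.toLinearMap

@[simp] theorem lft_app {X : Type} [AddCommGroup X] [Module K X] (k : ℕ)
    (f : C k →ₗ[K] D →ₗ[K] X) (x : C k) (h : D) : lft e k f (app e k x h) = f x h := by
  simp [lft, app]

theorem app_induction {k : ℕ} {P : C (k+1) → Prop} (h0 : P 0)
    (ha : ∀ x h, P (app e k x h)) (hadd : ∀ x y, P x → P y → P (x + y)) (x : C (k+1)) : P x := by
  obtain ⟨t, rfl⟩ := (e k).surjective x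
  induction t with
  | zero => simpa using h0
  | tmul x y => exact ha x y
  | add x y hx hy => rw [map_add]; exact hadd _ _ hx hy

theorem tower_ext {X : Type} [AddCommGroup X] [Module K X] {k : ℕ}
    {f g : C (k+1) →ₗ[K] X} (h : ∀ x y, f (app e k x y) = g (app e k x y)) (x : C (k+1)) :
    f x = g x := by
  induction x using app_induction e with
  | h0 => simp
  | ha x y => exact h x y
  | hadd x y hx hy => simp [hx, hy]

/-- action on the coefficient only -/
noncomputable def th (θ0 : C 0 →ₗ[K] D →ₗ[K] C 0) : ∀ k, C k →ₗ[K] D →ₗ[K] C k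
  | 0 => θ0
  | (k+1) => lft e k (LinearMap.mk₂ K (fun x h' => ((app e k).flip h') ∘ₗ (th θ0 k x))
      (by intros; ext; simp) (by intros; ext; simp) (by intros; ext; simp) (by intros; ext; simp))

@[simp] theorem th_zero (θ0 : C 0 →ₗ[K] D →ₗ[K] C 0) (x : C 0) (h : D) :
    th e θ0 0 x h = θ0 x h := rfl

@[simp] theorem th_app (θ0 : C 0 →ₗ[K] D →ₗ[K] C 0) (k : ℕ) (x : C k) (h h' : D) :
    th e θ0 (k+1) (app e k x h') h = app e k (th e θ0 k x h) h' := by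
  simp [th]

/-- total action, with the opposite sign on the coefficient -/
noncomputable def ta (θ0 : C 0 →ₗ[K] D →ₗ[K] C 0) (br : D →ₗ[K] D →ₗ[K] D) :
    ∀ k, C k →ₗ[K] D →ₗ[K] C k
  | 0 => -θ0
  | (k+1) => lft e k (LinearMap.mk₂ K
      (fun x h' => ((app e k).flip h') ∘ₗ (ta θ0 br k x) + (app e k x) ∘ₗ (br h'))
      (by intros; ext; simp; abel) (by intros; ext; simp)
      (by intros; ext; simp; abel) (by intros; ext; simp))

@[simp] theorem ta_zero (θ0 : C 0 →ₗ[K] D →ₗ[K] C 0) (br : D →ₗ[K] D →ₗ[K] D) (x : C 0) (h : D) :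
    ta e θ0 br 0 x h = - θ0 x h := rfl

@[simp] theorem ta_app (θ0 : C 0 →ₗ[K] D →ₗ[K] C 0) (br : D →ₗ[K] D →ₗ[K] D)
    (k : ℕ) (x : C k) (h h' : D) :
    ta e θ0 br (k+1) (app e k x h') h
      = app e k (ta e θ0 br k x h) h' + app e k x (br h' h) := by
  simp [ta]

/-- insert a letter in front -/
noncomputable def la : ∀ k, C k →ₗ[K] D →ₗ[K] C (k+1)
  | 0 => app e 0
  | (k+1) => lft e k (LinearMap.mk₂ K (fun x h' => ((app e (k+1)).flip h') ∘ₗ (la k x))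
      (by intros; ext; simp) (by intros; ext; simp) (by intros; ext; simp) (by intros; ext; simp))

@[simp] theorem la_zero (x : C 0) (h : D) : la e 0 x h = app e 0 x h := rfl

@[simp] theorem la_app (k : ℕ) (x : C k) (h h' : D) :
    la e (k+1) (app e k x h') h = app e (k+1) (la e k x h) h' := by
  simp [la]

/-- the coefficient part of the boundary -/
noncomputable def AA (θ0 : C 0 →ₗ[K] D →ₗ[K] C 0) : ∀ k, C (k+1) →ₗ[K] C k
  | 0 => lft e 0 θ0
  | (k+1) => lft e (k+1) ((app e k) ∘ₗ (AA θ0 k) + ((-1 : K)^(k+1)) • th e θ0 (k+1))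

@[simp] theorem AA_zero (θ0 : C 0 →ₗ[K] D →ₗ[K] C 0) (x : C 0) (h : D) :
    AA e θ0 0 (app e 0 x h) = θ0 x h := by simp [AA]

@[simp] theorem AA_app (θ0 : C 0 →ₗ[K] D →ₗ[K] C 0) (k : ℕ) (x : C (k+1)) (h : D) :
    AA e θ0 (k+1) (app e (k+1) x h)
      = app e k (AA e θ0 k x) h + ((-1 : K)^(k+1)) • th e θ0 (k+1) x h := by simp [AA]

variable (θ0 : C 0 →ₗ[K] D →ₗ[K] C 0) (br : D →ₗ[K] D →ₗ[K] D)

theorem ta_comm (hθ : ∀ v a b, θ0 v (br a b) = θ0 (θ0 v a) b - θ0 (θ0 v b) a)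
    (hbr : ∀ x a b, br x (br a b) = br (br x a) b - br (br x b) a) (a b : D) :
    ∀ (k : ℕ) (x : C k),
    ta e θ0 br k (ta e θ0 br k x a) b - ta e θ0 br k (ta e θ0 br k x b) a
      - ta e θ0 br k x (br a b)
      = (2 : K) • (th e θ0 k (th e θ0 k x a) b - th e θ0 k (th e θ0 k x b) a)
  | 0, x => by
    simp [hθ, two_smul]; abel
  | (k+1), x => by
    induction x using app_induction e with
    | h0 => simp
    | ha x y =>
      have := congrArg (fun t => app e k t y) (ta_comm hθ hbr a b k x)
      simp only [map_sub, map_smul, LinearMap.sub_apply, LinearMap.smul_apply] at this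
      simp only [ta_app, th_app, map_add, LinearMap.add_apply, hbr, map_sub]
      rw [← this]; abel
    | hadd x y hx hy =>
      simp only [map_add, LinearMap.add_apply, smul_sub, smul_add] at hx hy ⊢
      linear_combination (norm := module) hx + hy

variable (d : ∀ k, C (k+1) →ₗ[K] C k)

theorem ta_d (hθ : ∀ v a b, θ0 v (br a b) = θ0 (θ0 v a) b - θ0 (θ0 v b) a)
    (hbr : ∀ x a b, br x (br a b) = br (br x a) b - br (br x b) a)
    (hd0 : ∀ v h, d 0 (app e 0 v h) = ta e θ0 br 0 v h)
    (hdS : ∀ k x h, d (k+1) (app e (k+1) x h)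
      = app e k (d k x) h + ((-1 : K)^(k+1)) • ta e θ0 br (k+1) x h) (h : D) :
    ∀ (k : ℕ) (x : C (k+1)),
    ta e θ0 br k (d k x) h - d k (ta e θ0 br (k+1) x h)
      = (2 : K) • (th e θ0 k (AA e θ0 k x) h - AA e θ0 k (th e θ0 (k+1) x h))
  | 0, x => by
    induction x using app_induction e with
    | h0 => simp
    | ha x y =>
      have := ta_comm e θ0 br hθ hbr y h 0 x
      simp only [ta_app, th_app, map_add, hd0, AA_zero]
      simp only [th_zero] at this ⊢
      rw [← this]; abel
    | hadd x y hx hy =>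
      simp only [map_add, LinearMap.add_apply, smul_sub, smul_add] at hx hy ⊢
      linear_combination (norm := module) hx + hy
  | (k+1), x => by
    induction x using app_induction e with
    | h0 => simp
    | ha x y =>
      have h1 := congrArg (fun t => app e k t y) (ta_d hθ hbr hd0 hdS h k x)
      have h2 := congrArg (fun t => ((-1 : K)^(k+1)) • t) (ta_comm e θ0 br hθ hbr y h (k+1) x)
      simp only [map_sub, map_smul, LinearMap.sub_apply, LinearMap.smul_apply,
        smul_sub] at h1 h2
      simp only [ta_app, th_app, map_add, hdS, AA_app, LinearMap.add_apply, map_smul,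
        LinearMap.smul_apply, smul_sub, smul_add]
      linear_combination (norm := module) h1 + h2
    | hadd x y hx hy =>
      simp only [map_add, LinearMap.add_apply, smul_sub, smul_add] at hx hy ⊢
      linear_combination (norm := module) hx + hy

theorem d_sq (hθ : ∀ v a b, θ0 v (br a b) = θ0 (θ0 v a) b - θ0 (θ0 v b) a)
    (hbr : ∀ x a b, br x (br a b) = br (br x a) b - br (br x b) a)
    (hd0 : ∀ v h, d 0 (app e 0 v h) = ta e θ0 br 0 v h)
    (hdS : ∀ k x h, d (k+1) (app e (k+1) x h)
      = app e k (d k x) h + ((-1 : K)^(k+1)) • ta e θ0 br (k+1) x h) :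
    ∀ (k : ℕ) (x : C (k+2)),
    d k (d (k+1) x) = (2 : K) • AA e θ0 k (AA e θ0 (k+1) x)
  | 0, x => by
    induction x using app_induction e with
    | h0 => simp
    | ha x y =>
      have h2 := ta_d e θ0 br d hθ hbr hd0 hdS y 0 x
      simp only [hdS, AA_app, map_add, hd0, AA_zero, map_smul]
      simp only [th_zero] at h2
      simp only [zero_add, pow_one, neg_smul, one_smul, ← sub_eq_add_neg]
      exact h2
    | hadd x y hx hy => simp [hx, hy]
  | (k+1), x => by
    induction x using app_induction e with
    | h0 => simp
    | ha x y =>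
      have h1 := congrArg (fun t => app e k t y) (d_sq hθ hbr hd0 hdS k x)
      have h2 := congrArg (fun t => ((-1 : K)^(k+1)) • t) (ta_d e θ0 br d hθ hbr hd0 hdS y (k+1) x)
      simp only [map_smul, LinearMap.smul_apply, smul_sub] at h1 h2
      simp only [hdS, AA_app, map_add, map_smul, smul_add, h1]
      linear_combination (norm := module) h2
    | hadd x y hx hy => simp [hx, hy]

end tower
end LodayAux

namespace LodayAux

section tower2
variable {K : Type} [Field K] {D : Type} [AddCommGroup D] [Module K D]
  {C : ℕ → Type} [∀ k, AddCommGroup (C k)] [∀ k, Module K (C k)]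
  (e : ∀ k, (C k ⊗[K] D) ≃ₗ[K] C (k+1))
  (θ0 : C 0 →ₗ[K] D →ₗ[K] C 0) (br : D →ₗ[K] D →ₗ[K] D)

theorem th_la (l h : D) : ∀ (k : ℕ) (x : C k),
    th e θ0 (k+1) (la e k x l) h = la e k (th e θ0 k x h) l
  | 0, x => by simp
  | (k+1), x => by
    induction x using app_induction e with
    | h0 => simp
    | ha x y => simp [th_la l h k x]
    | hadd x y hx hy => simp [hx, hy]

theorem AA_la (l : D) : ∀ (k : ℕ) (x : C (k+1)),
    AA e θ0 (k+1) (la e (k+1) x l) = th e θ0 (k+1) x l - la e k (AA e θ0 k x) l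
  | 0, x => by
    induction x using app_induction e with
    | h0 => simp
    | ha x y => 
      simp only [la_app, AA_app, la_zero, AA_zero, th_app, th_zero]
      module
    | hadd x y hx hy => 
      simp only [map_add, LinearMap.add_apply, hx, hy]; abel
  | (k+1), x => by
    induction x using app_induction e with
    | h0 => simp
    | ha x y => 
      simp only [la_app, AA_app, th_app, AA_la l k x, th_la, map_sub, map_add, map_smul,
        LinearMap.sub_apply, LinearMap.add_apply, LinearMap.smul_apply]
      module
    | hadd x y hx hy => 
      simp only [map_add, LinearMap.add_apply, hx, hy]; abel

/-- append minus insertion in front; commutes with `AA` -/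
noncomputable def ka (k : ℕ) : C k →ₗ[K] D →ₗ[K] C (k+1) :=
  app e k + ((-1 : K)^(k+1)) • la e k

theorem ka_apply (k : ℕ) (x : C k) (l : D) :
    ka e k x l = app e k x l + ((-1 : K)^(k+1)) • la e k x l := by simp [ka]

theorem AA_ka_zero (x : C 0) (l : D) : AA e θ0 0 (ka e 0 x l) = 0 := by
  simp [ka_apply]

theorem AA_ka (k : ℕ) (x : C (k+1)) (l : D) :
    AA e θ0 (k+1) (ka e (k+1) x l) = ka e k (AA e θ0 k x) l := by
  simp only [ka_apply, map_add, map_smul, AA_la, AA_app]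
  module

variable (pe : D →ₗ[K] D)

/-- words with a letter of `ker pe` among the last `t` letters -/
noncomputable def TT : ∀ (_ k : ℕ), Submodule K (C k)
  | 0, _ => ⊥
  | (_+1), 0 => ⊥
  | (t+1), (k+1) => Submodule.map₂ (app e k) (TT t k) ⊤ ⊔
      Submodule.map₂ (app e k) ⊤ (LinearMap.ker pe)

theorem TT_zero (k : ℕ) : TT e pe 0 k = ⊥ := by rw [TT]

theorem TT_deg_zero (t : ℕ) : TT e pe t 0 = ⊥ := by
  cases t <;> rw [TT]

theorem TT_succ (t k : ℕ) : TT e pe (t+1) (k+1) = Submodule.map₂ (app e k) (TT e pe t k) ⊤ ⊔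
      Submodule.map₂ (app e k) ⊤ (LinearMap.ker pe) := by
  rw [TT]

theorem app_mem {t k : ℕ} {x : C k} (hx : x ∈ TT e pe t k) (h : D) :
    app e k x h ∈ TT e pe (t+1) (k+1) := by
  rw [TT_succ]
  exact Submodule.mem_sup_left (Submodule.apply_mem_map₂ _ hx trivial)

theorem app_mem' {t k : ℕ} (x : C k) {h : D} (hh : pe h = 0) :
    app e k x h ∈ TT e pe (t+1) (k+1) := by
  rw [TT_succ]
  exact Submodule.mem_sup_right (Submodule.apply_mem_map₂ _ trivial hh)

theorem TT_induction_aux {t k : ℕ} {P : C (k+1) → Prop} (h0 : P 0)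
    (ha : ∀ x ∈ TT e pe t k, ∀ h, P (app e k x h))
    (hb : ∀ x, ∀ h, pe h = 0 → P (app e k x h))
    (hadd : ∀ x y, P x → P y → P (x + y))
    {x : C (k+1)} (hx : x ∈ TT e pe (t+1) (k+1)) : P x := by
  rw [TT_succ, Submodule.mem_sup] at hx
  obtain ⟨y, hy, z, hz, rfl⟩ := hx
  rw [Submodule.map₂_eq_span_image2] at hy hz
  apply hadd
  · refine Submodule.closure_induction h0 (fun x y _ _ hx hy => hadd x y hx hy) ?_ hy
    rintro r _ ⟨m, hm, n, hn, rfl⟩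
    rw [← map_smul]; exact ha m hm _
  · refine Submodule.closure_induction h0 (fun x y _ _ hx hy => hadd x y hx hy) ?_ hz
    rintro r _ ⟨m, hm, n, hn, rfl⟩
    rw [← map_smul]; exact hb m _ (Submodule.smul_mem _ r hn)

theorem TT_induction {t k : ℕ} {P : ∀ x : C (k+1), x ∈ TT e pe (t+1) (k+1) → Prop}
    (h0 : P 0 (zero_mem _))
    (ha : ∀ x (hx : x ∈ TT e pe t k), ∀ h, P (app e k x h) (app_mem e pe hx h))
    (hb : ∀ x, ∀ h, (hh : pe h = 0) → P (app e k x h) (app_mem' e pe x hh))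
    (hadd : ∀ x y hx hy, P x hx → P y hy → P (x + y) (add_mem hx hy))
    {x : C (k+1)} (hx : x ∈ TT e pe (t+1) (k+1)) : P x hx := by
  have : ∃ hx, P x hx := by
    refine TT_induction_aux e pe (P := fun x => ∃ hx, P x hx) ⟨_, h0⟩
      (fun x hx h => ⟨_, ha x hx h⟩) (fun x h hh => ⟨_, hb x h hh⟩) ?_ hx
    rintro x y ⟨hx, px⟩ ⟨hy, py⟩
    exact ⟨_, hadd x y hx hy px py⟩
  exact this.2

theorem TT_le_succ : ∀ (t k : ℕ) {x : C k}, x ∈ TT e pe t k → x ∈ TT e pe (t+1) k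
  | 0, k, x, hx => by
    rw [TT_zero, Submodule.mem_bot] at hx
    rw [hx]; exact zero_mem _
  | (t+1), 0, x, hx => by
    rw [TT_deg_zero] at *; exact hx
  | (t+1), (k+1), x, hx => by
    induction hx using TT_induction e pe with
    | h0 => exact zero_mem _
    | ha x hx h => exact app_mem e pe (TT_le_succ t k hx) h
    | hb x h hh => exact app_mem' e pe x hh
    | hadd x y _ _ hx hy => exact add_mem hx hy

theorem ta_mem (hpb : ∀ i h, pe i = 0 → pe (br i h) = 0) (h : D) :
    ∀ (t k : ℕ) {x : C k}, x ∈ TT e pe t k → ta e θ0 br k x h ∈ TT e pe t k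
  | 0, k, x, hx => by
    rw [TT_zero, Submodule.mem_bot] at *
    simp [hx]
  | (t+1), 0, x, hx => by
    rw [TT_deg_zero, Submodule.mem_bot] at *
    simp [hx]
  | (t+1), (k+1), x, hx => by
    induction hx using TT_induction e pe with
    | h0 => simp
    | ha x hx h' =>
      rw [ta_app]
      exact add_mem (app_mem e pe (ta_mem hpb h t k hx) _) (app_mem e pe hx _)
    | hb x h' hh =>
      rw [ta_app]
      exact add_mem (app_mem' e pe _ hh) (app_mem' e pe _ (hpb _ _ hh))
    | hadd x y _ _ hx hy => simpa using add_mem hx hy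

theorem la_mem (l : D) : ∀ (t k : ℕ) {x : C k}, x ∈ TT e pe t k → la e k x l ∈ TT e pe t (k+1)
  | 0, k, x, hx => by
    rw [TT_zero, Submodule.mem_bot] at *
    simp [hx]
  | (t+1), 0, x, hx => by
    rw [TT_deg_zero, Submodule.mem_bot] at hx
    simp [hx]
  | (t+1), (k+1), x, hx => by
    induction hx using TT_induction e pe with
    | h0 => simp
    | ha x hx h' =>
      rw [la_app]
      exact (app_mem e pe (la_mem l t k hx) _)
    | hb x h' hh =>
      rw [la_app]
      exact (app_mem' e pe _ hh)
    | hadd x y _ _ hx hy => simpa using add_mem hx hy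

theorem ka_sub_mem (l : D) (t k : ℕ) {x : C k} (hx : x ∈ TT e pe t k) :
    ka e k x l - app e k x l ∈ TT e pe t (k+1) := by
  rw [ka_apply, add_sub_cancel_left]
  exact Submodule.smul_mem _ _ (la_mem e pe l t k hx)

theorem ka_mem (l : D) (t k : ℕ) {x : C k} (hx : x ∈ TT e pe t k) :
    ka e k x l ∈ TT e pe (t+1) (k+1) := by
  have h1 := TT_le_succ e pe _ _ (ka_sub_mem e pe l t k hx)
  have h2 := app_mem e pe hx l
  simpa using add_mem h1 h2

theorem th_ker (hpt : ∀ v i, pe i = 0 → θ0 v i = 0) (i : D) (hi : pe i = 0) :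
    ∀ (k : ℕ) (x : C k), th e θ0 k x i = 0
  | 0, x => by simp [hpt x i hi]
  | (k+1), x => by
    induction x using app_induction e with
    | h0 => simp
    | ha x y => simp [th_ker hpt i hi k x]
    | hadd x y hx hy => simp [hx, hy]

theorem ta_ker (hpt : ∀ v i, pe i = 0 → θ0 v i = 0) (hpr : ∀ x i, pe i = 0 → br x i = 0)
    (i : D) (hi : pe i = 0) :
    ∀ (k : ℕ) (x : C k), ta e θ0 br k x i = 0
  | 0, x => by simp [hpt x i hi]
  | (k+1), x => by
    induction x using app_induction e with
    | h0 => simp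
    | ha x y => simp [ta_ker hpt hpr i hi k x, hpr y i hi]
    | hadd x y hx hy => simp [hx, hy]

variable (d : ∀ k, C (k+1) →ₗ[K] C k)

theorem d_mem (hpb : ∀ i h, pe i = 0 → pe (br i h) = 0)
    (hpt : ∀ v i, pe i = 0 → θ0 v i = 0) (hpr : ∀ x i, pe i = 0 → br x i = 0)
    (hd0 : ∀ v h, d 0 (app e 0 v h) = ta e θ0 br 0 v h)
    (hdS : ∀ k x h, d (k+1) (app e (k+1) x h)
      = app e k (d k x) h + ((-1 : K)^(k+1)) • ta e θ0 br (k+1) x h) :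
    ∀ (t k : ℕ) {x : C (k+1)}, x ∈ TT e pe t (k+1) → d k x ∈ TT e pe t k
  | 0, k, x, hx => by
    rw [TT_zero, Submodule.mem_bot] at *
    simp [hx]
  | (t+1), 0, x, hx => by
    induction hx using TT_induction e pe with
    | h0 => simp
    | ha x hx h' =>
      rw [TT_deg_zero, Submodule.mem_bot] at hx
      simp [hx]
    | hb x h' hh =>
      rw [hd0, ta_ker e θ0 br pe hpt hpr _ hh]; exact zero_mem _
    | hadd x y _ _ hx hy => simpa using add_mem hx hy
  | (t+1), (k+1), x, hx => by
    induction hx using TT_induction e pe with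
    | h0 => simp
    | ha x hx h' =>
      rw [hdS]
      refine add_mem (app_mem e pe (d_mem hpb hpt hpr hd0 hdS t k hx) _)
        (Submodule.smul_mem _ _ (TT_le_succ e pe _ _ (ta_mem e θ0 br pe hpb _ _ _ hx)))
    | hb x h' hh =>
      rw [hdS, ta_ker e θ0 br pe hpt hpr _ hh, smul_zero, add_zero]
      exact app_mem' e pe _ hh
    | hadd x y _ _ hx hy => simpa using add_mem hx hy

/-- generalized inverses in the acyclic situation -/
theorem exists_homotopy {X Y Z : Type} [AddCommGroup X] [Module K X] [AddCommGroup Y] [Module K Y]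
    [AddCommGroup Z] [Module K Z] (f : X →ₗ[K] Y) (g : Y →ₗ[K] Z)
    (hfg : ∀ y, g y = 0 → ∃ x, f x = y) :
    ∃ (h : Y →ₗ[K] X) (r : Z →ₗ[K] Y), (∀ y, f (h y) + r (g y) = y) ∧ ∀ y, g (f (h y)) = 0 := by
  obtain ⟨s, hs⟩ := g.rangeRestrict.exists_rightInverse_of_surjective g.range_rangeRestrict
  obtain ⟨q, hq⟩ := (LinearMap.range g).exists_isCompl
  obtain ⟨P, hP⟩ := (LinearMap.range g).subtype.exists_leftInverse_of_injective
    (LinearMap.ker_eq_bot.2 Subtype.val_injective)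
  let r : Z →ₗ[K] Y := s ∘ₗ P
  have hr : ∀ y, g (r (g y)) = g y := by
    intro y
    have h1 : P (g y) = g.rangeRestrict y := by
      have := LinearMap.congr_fun hP (g.rangeRestrict y)
      simpa using this
    have h2 := LinearMap.congr_fun hs (g.rangeRestrict y)
    have := congrArg Subtype.val h2
    simpa [r, h1] using this
  obtain ⟨s', hs'⟩ := f.rangeRestrict.exists_rightInverse_of_surjective f.range_rangeRestrict
  let Q : Y →ₗ[K] LinearMap.range f := LinearMap.codRestrict _ (LinearMap.id - r ∘ₗ g) (by
    intro y
    obtain ⟨x, hx⟩ := hfg (y - r (g y)) (by simp [hr])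
    exact ⟨x, by simp [hx]⟩)
  have hQ : ∀ y, f (s' (Q y)) = y - r (g y) := by
    intro y
    have h2 := LinearMap.congr_fun hs' (Q y)
    have := congrArg Subtype.val h2
    simpa [Q] using this
  refine ⟨s' ∘ₗ Q, r, fun y => ?_, fun y => ?_⟩
  · simp [hQ]
  · simp [hQ, hr]

/-- acyclicity in degree `k` -/
def Acyc : ℕ → Prop
  | 0 => ∀ x : C 0, ∃ y, d 0 y = x
  | (k+1) => ∀ x : C (k+1), d k x = 0 → ∃ y, d (k+1) y = x

theorem homotopy_mod (h2 : (2 : K) ≠ 0)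
    (hθ : ∀ v a b, θ0 v (br a b) = θ0 (θ0 v a) b - θ0 (θ0 v b) a)
    (hbr : ∀ x a b, br x (br a b) = br (br x a) b - br (br x b) a)
    (hpp : ∀ h, pe (pe h) = pe h)
    (hpb : ∀ i h, pe i = 0 → pe (br i h) = 0)
    (hpt : ∀ v i, pe i = 0 → θ0 v i = 0) (hpr : ∀ x i, pe i = 0 → br x i = 0)
    (hd0 : ∀ v h, d 0 (app e 0 v h) = ta e θ0 br 0 v h)
    (hdS : ∀ k x h, d (k+1) (app e (k+1) x h)
      = app e k (d k x) h + ((-1 : K)^(k+1)) • ta e θ0 br (k+1) x h) :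
    ∀ (b k : ℕ), b ≤ k → (∀ a ≤ k, Acyc d a) →
    ∃ (H : C (k+1) →ₗ[K] C (k+2)) (G : C k →ₗ[K] C (k+1)),
      (∀ x, H x ∈ TT e pe (b+1) (k+2)) ∧
      (∀ x, AA e θ0 k (AA e θ0 (k+1) (H x)) = 0) ∧
      (∀ x ∈ TT e pe b k, G x = 0) ∧
      (∀ x ∈ TT e pe (b+1) (k+1), x - d (k+1) (H x) - G (d k x) ∈ TT e pe b (k+1))
  | 0, 0, _, hac => by
    obtain ⟨h, hh⟩ := (d 0).exists_rightInverse_of_surjective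
      (LinearMap.range_eq_top.2 (hac 0 le_rfl))
    have hh' : ∀ x, d 0 (h x) = x := fun x => LinearMap.congr_fun hh x
    refine ⟨lft e 0 ((app e 1 ∘ₗ h).compl₂ (LinearMap.id - pe)), 0, ?_, ?_, ?_, ?_⟩
    · intro x
      induction x using app_induction e with
      | h0 => simp
      | ha x y =>
        rw [lft_app]
        exact app_mem' e pe _ (by simp [hpp])
      | hadd x y hx hy => simpa using add_mem hx hy
    · intro x
      induction x using app_induction e with
      | h0 => simp
      | ha x y =>
        have hz : pe (y - pe y) = 0 := by simp [hpp]
        rw [lft_app]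
        simp only [LinearMap.compl₂_apply, LinearMap.comp_apply, LinearMap.sub_apply,
          LinearMap.id_apply]
        rw [AA_app, th_ker e θ0 pe hpt _ hz, smul_zero, add_zero, AA_zero, hpt _ _ hz]
      | hadd x y hx hy => simp [hx, hy]
    · simp
    · intro x hx
      induction hx using TT_induction e pe with
      | h0 => simp
      | ha x hx h' =>
        rw [TT_zero, Submodule.mem_bot] at hx
        simp [hx]
      | hb x h' hz =>
        rw [lft_app]
        simp only [LinearMap.compl₂_apply, LinearMap.comp_apply, LinearMap.sub_apply,
          LinearMap.id_apply, hz, sub_zero, LinearMap.zero_apply]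
        rw [hdS, ta_ker e θ0 br pe hpt hpr _ hz, hh']
        simp
      | hadd x y _ _ hx hy =>
        have := add_mem hx hy
        simp only [map_add]
        convert this using 1; abel
  | 0, (k+1), _, hac => by
    obtain ⟨h, r, hr, hh⟩ := exists_homotopy (d (k+1)) (d k) (hac (k+1) le_rfl)
    refine ⟨lft e (k+1) ((app e (k+2) ∘ₗ h).compl₂ (LinearMap.id - pe)),
      lft e k ((app e (k+1) ∘ₗ r).compl₂ (LinearMap.id - pe)), ?_, ?_, ?_, ?_⟩
    · intro x
      induction x using app_induction e with
      | h0 => simp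
      | ha x y =>
        rw [lft_app]
        exact app_mem' e pe _ (by simp [hpp])
      | hadd x y hx hy => simpa using add_mem hx hy
    · intro x
      induction x using app_induction e with
      | h0 => simp
      | ha x y =>
        have hz : pe (y - pe y) = 0 := by simp [hpp]
        have h3 := hh x
        rw [d_sq e θ0 br d hθ hbr hd0 hdS] at h3
        have h4 := (smul_eq_zero.1 h3).resolve_left h2
        rw [lft_app]
        simp only [LinearMap.compl₂_apply, LinearMap.comp_apply, LinearMap.sub_apply,
          LinearMap.id_apply]
        rw [AA_app, th_ker e θ0 pe hpt _ hz, smul_zero, add_zero, AA_app,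
          th_ker e θ0 pe hpt _ hz, smul_zero, add_zero, h4]
        simp
      | hadd x y hx hy => simp [hx, hy]
    · intro x hx
      rw [TT_zero, Submodule.mem_bot] at hx
      simp [hx]
    · intro x hx
      induction hx using TT_induction e pe with
      | h0 => simp
      | ha x hx h' =>
        rw [TT_zero, Submodule.mem_bot] at hx
        simp [hx]
      | hb x h' hz =>
        rw [lft_app, hdS, ta_ker e θ0 br pe hpt hpr _ hz, smul_zero, add_zero, lft_app]
        simp only [LinearMap.compl₂_apply, LinearMap.comp_apply, LinearMap.sub_apply,
          LinearMap.id_apply, hz, sub_zero]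
        rw [hdS, ta_ker e θ0 br pe hpt hpr _ hz, smul_zero, add_zero, sub_sub,
          ← LinearMap.add_apply, ← map_add, hr, sub_self]
        exact zero_mem _
      | hadd x y _ _ hx hy =>
        have := add_mem hx hy
        simp only [map_add]
        convert this using 1; abel
  | (b+1), 0, hb, _ => absurd hb (by omega)
  | (b+1), (k+1), hb, hac => by
    obtain ⟨H, G, hT, hA, hG, hm⟩ := homotopy_mod h2 hθ hbr hpp hpb hpt hpr hd0 hdS b k
      (by omega) (fun a ha => hac a (by omega))
    refine ⟨lft e (k+1) ((ka e (k+2) ∘ₗ H).compl₂ pe),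
      lft e k ((app e (k+1) ∘ₗ G).compl₂ pe), ?_, ?_, ?_, ?_⟩
    · intro x
      induction x using app_induction e with
      | h0 => simp
      | ha x y =>
        rw [lft_app]
        exact ka_mem e pe _ _ _ (hT x)
      | hadd x y hx hy => simpa using add_mem hx hy
    · intro x
      induction x using app_induction e with
      | h0 => simp
      | ha x y =>
        rw [lft_app]
        simp only [LinearMap.compl₂_apply, LinearMap.comp_apply]
        rw [AA_ka, AA_ka, hA]
        simp
      | hadd x y hx hy => simp [hx, hy]
    · intro x hx
      induction hx using TT_induction e pe with
      | h0 => simp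
      | ha x hx h' => simp [hG x hx]
      | hb x h' hz => simp [hz]
      | hadd x y _ _ hx hy => simp [hx, hy]
    · intro x hx
      induction hx using TT_induction e pe with
      | h0 => simp
      | ha x hx h' =>
        rw [lft_app, hdS, map_add, lft_app, map_smul]
        simp only [LinearMap.compl₂_apply, LinearMap.comp_apply]
        have hkill : lft e k ((app e (k+1) ∘ₗ G).compl₂ pe) (ta e θ0 br (k+1) x h') = 0 := by
          have h5 := ta_mem e θ0 br pe hpb h' _ _ hx
          generalize ta e θ0 br (k+1) x h' = w at h5 ⊢
          induction h5 using TT_induction e pe with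
          | h0 => simp
          | ha x hx h' => simp [hG x hx]
          | hb x h' hz => simp [hz]
          | hadd x y _ _ hx hy => simp [hx, hy]
        rw [hkill, smul_zero, add_zero]
        have e1 := d_mem e θ0 br pe d hpb hpt hpr hd0 hdS _ _
          (ka_sub_mem e pe (pe h') _ _ (hT x))
        rw [map_sub, hdS] at e1
        have e2 := Submodule.smul_mem _ ((-1 : K)^(k+2))
          (ta_mem e θ0 br pe hpb (pe h') _ _ (hT x))
        have e3 := app_mem e pe (hm x hx) (pe h')
        have e4 := app_mem' e pe (t := b) x (h := h' - pe h') (by simp [hpp])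
        have e5 := sub_mem (add_mem e3 e4) (add_mem e1 e2)
        convert e5 using 1
        simp only [map_sub, LinearMap.sub_apply]
        abel
      | hb x h' hz =>
        rw [lft_app, hdS, ta_ker e θ0 br pe hpt hpr _ hz, smul_zero, add_zero, lft_app]
        simp only [LinearMap.compl₂_apply, LinearMap.comp_apply, hz, map_zero, sub_zero]
        exact app_mem' e pe x hz
      | hadd x y _ _ hx hy =>
        have := add_mem hx hy
        simp only [map_add]
        convert this using 1; abel

end tower2
end LodayAux

namespace LodayAux

section main
variable {K : Type} [Field K] {D : Type} [AddCommGroup D] [Module K D]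
  {C : ℕ → Type} [∀ k, AddCommGroup (C k)] [∀ k, Module K (C k)]
  (e : ∀ k, (C k ⊗[K] D) ≃ₗ[K] C (k+1))
  (θ0 : C 0 →ₗ[K] D →ₗ[K] C 0) (br : D →ₗ[K] D →ₗ[K] D)
  (d : ∀ k, C (k+1) →ₗ[K] C k)
  {L : Type} [AddCommGroup L] [Module K L]
  {C' : ℕ → Type} [∀ k, AddCommGroup (C' k)] [∀ k, Module K (C' k)]
  (e' : ∀ k, (C' k ⊗[K] L) ≃ₗ[K] C' (k+1))
  (θ0' : C' 0 →ₗ[K] L →ₗ[K] C' 0)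
  (d' : ∀ k, C' (k+1) →ₗ[K] C' k)
  (π : D →ₗ[K] L) (s : L →ₗ[K] D)
  (P : ∀ k, C k →ₗ[K] C' k) (S : ∀ k, C' k →ₗ[K] C k)

theorem PS_id (hπs : ∀ l, π (s l) = l) (hPS : ∀ v, P 0 (S 0 v) = v)
    (hP : ∀ k x h, P (k+1) (app e k x h) = app e' k (P k x) (π h))
    (hS : ∀ k x l, S (k+1) (app e' k x l) = app e k (S k x) (s l)) :
    ∀ k (x : C' k), P k (S k x) = x
  | 0, x => hPS x
  | (k+1), x => by
    induction x using app_induction e' with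
    | h0 => simp
    | ha x y => rw [hS, hP, PS_id hπs hPS hP hS k x, hπs]
    | hadd x y hx hy => simp [hx, hy]

theorem sub_SP_mem (hπs : ∀ l, π (s l) = l) (hSP : ∀ v, S 0 (P 0 v) = v)
    (hP : ∀ k x h, P (k+1) (app e k x h) = app e' k (P k x) (π h))
    (hS : ∀ k x l, S (k+1) (app e' k x l) = app e k (S k x) (s l)) :
    ∀ k (x : C k), x - S k (P k x) ∈ TT e (s ∘ₗ π) k k
  | 0, x => by simp [hSP]
  | (k+1), x => by
    induction x using app_induction e with
    | h0 => simp
    | ha x y =>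
      rw [hP, hS]
      have h1 := app_mem e (s ∘ₗ π) (sub_SP_mem hπs hSP hP hS k x) y
      have h2 := app_mem' e (s ∘ₗ π) (t := k) (S k (P k x)) (h := y - s (π y)) (by simp [hπs])
      convert add_mem h1 h2 using 1
      simp
    | hadd x y hx hy =>
      convert add_mem hx hy using 1
      simp only [map_add]; abel

theorem th_S (hθs : ∀ v l, θ0 (S 0 v) (s l) = S 0 (θ0' v l))
    (hS : ∀ k x l, S (k+1) (app e' k x l) = app e k (S k x) (s l)) (l : L) :
    ∀ k (x : C' k), th e θ0 k (S k x) (s l) = S k (th e' θ0' k x l)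
  | 0, x => hθs x l
  | (k+1), x => by
    induction x using app_induction e' with
    | h0 => simp
    | ha x y => rw [hS, th_app, th_S hθs hS l k x, th_app, hS]
    | hadd x y hx hy => simp [hx, hy]

theorem AA_S (hθs : ∀ v l, θ0 (S 0 v) (s l) = S 0 (θ0' v l))
    (hS : ∀ k x l, S (k+1) (app e' k x l) = app e k (S k x) (s l)) :
    ∀ k (x : C' (k+1)), AA e θ0 k (S (k+1) x) = S k (AA e' θ0' k x)
  | 0, x => by
    induction x using app_induction e' with
    | h0 => simp
    | ha x y => rw [hS, AA_zero, AA_zero, hθs]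
    | hadd x y hx hy => simp [hx, hy]
  | (k+1), x => by
    induction x using app_induction e' with
    | h0 => simp
    | ha x y =>
      rw [hS, AA_app, AA_S hθs hS k x, AA_app, th_S e θ0 e' θ0' s S hθs hS, map_add, map_smul, hS]
    | hadd x y hx hy => simp [hx, hy]

theorem acyc_main (h2 : (2 : K) ≠ 0)
    (hθ : ∀ v a b, θ0 v (br a b) = θ0 (θ0 v a) b - θ0 (θ0 v b) a)
    (hbr : ∀ x a b, br x (br a b) = br (br x a) b - br (br x b) a)
    (hπb : ∀ i h, π i = 0 → π (br i h) = 0)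
    (hπt : ∀ v i, π i = 0 → θ0 v i = 0) (hπr : ∀ x i, π i = 0 → br x i = 0)
    (hd0 : ∀ v h, d 0 (app e 0 v h) = ta e θ0 br 0 v h)
    (hdS : ∀ k x h, d (k+1) (app e (k+1) x h)
      = app e k (d k x) h + ((-1 : K)^(k+1)) • ta e θ0 br (k+1) x h)
    (hπs : ∀ l, π (s l) = l) (hPS : ∀ v, P 0 (S 0 v) = v) (hSP : ∀ v, S 0 (P 0 v) = v)
    (hP : ∀ k x h, P (k+1) (app e k x h) = app e' k (P k x) (π h))
    (hS : ∀ k x l, S (k+1) (app e' k x l) = app e k (S k x) (s l))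
    (hθs : ∀ v l, θ0 (S 0 v) (s l) = S 0 (θ0' v l))
    (hPd : ∀ k x, P k (d k x) = d' k (P (k+1) x))
    (hL : ∀ k, Acyc d' k) : ∀ k, Acyc d k := by
  have hs0 : ∀ h, (s ∘ₗ π) h = 0 → π h = 0 := by
    intro h hh
    have := congrArg π hh
    simpa [hπs] using this
  intro k
  induction k using Nat.strong_induction_on with
  | _ k ih =>
  cases k with
  | zero =>
    intro x
    obtain ⟨y, hy⟩ := hL 0 (P 0 x)
    refine ⟨S 1 y, ?_⟩
    rw [← hSP (d 0 _), hPd, PS_id e e' π s P S hπs hPS hP hS, hy, hSP]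
  | succ k =>
    intro x hx
    have key : ∀ b ≤ k + 1, ∀ x ∈ TT e (s ∘ₗ π) b (k+1), d k x = 0 → ∃ y, d (k+1) y = x := by
      intro b
      induction b with
      | zero =>
        intro _ x hx _
        rw [TT_zero, Submodule.mem_bot] at hx
        exact ⟨0, by simp [hx]⟩
      | succ b ihb =>
        intro hb x hx hdx
        obtain ⟨H, G, -, hA, -, hm⟩ := homotopy_mod e θ0 br (s ∘ₗ π) d h2 hθ hbr (by simp [hπs])
          (fun i h hi => by simp [hπb i h (hs0 i hi)])
          (fun v i hi => hπt v i (hs0 i hi)) (fun x i hi => hπr x i (hs0 i hi)) hd0 hdS b k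
          (by omega) (fun a ha => ih a (by omega))
        have h1 := hm x hx
        rw [hdx, map_zero, sub_zero] at h1
        obtain ⟨y, hy⟩ := ihb (by omega) _ h1 (by
          rw [map_sub, hdx, d_sq e θ0 br d hθ hbr hd0 hdS, hA]; simp)
        exact ⟨y + H x, by rw [map_add, hy]; abel⟩
    obtain ⟨y, hy⟩ := hL (k+1) (P (k+1) x) (by rw [← hPd, hx, map_zero])
    have hPy := PS_id e e' π s P S hπs hPS hP hS (k+2) y
    have hAy : AA e' θ0' k (AA e' θ0' (k+1) y) = 0 := by
      have h3 := d_sq e θ0 br d hθ hbr hd0 hdS k (S (k+2) y)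
      have h4 := congrArg (P k) h3
      rw [hPd, hPd, hPy, hy, ← hPd, hx, map_zero, map_smul,
        AA_S e θ0 e' θ0' s S hθs hS, AA_S e θ0 e' θ0' s S hθs hS,
        PS_id e e' π s P S hπs hPS hP hS] at h4
      exact (smul_eq_zero.1 h4.symm).resolve_left h2
    have hmem := sub_SP_mem e e' π s P S hπs hSP hP hS (k+1) (x - d (k+1) (S (k+2) y))
    rw [map_sub (P (k+1)), hPd, hPy, hy, sub_self, map_zero, sub_zero] at hmem
    obtain ⟨z, hz⟩ := key (k+1) le_rfl _ hmem (by
      rw [map_sub, hx, d_sq e θ0 br d hθ hbr hd0 hdS, AA_S e θ0 e' θ0' s S hθs hS,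
        AA_S e θ0 e' θ0' s S hθs hS, hAy]; simp)
    exact ⟨z + S (k+2) y, by rw [map_add, hz]; abel⟩

end main
end LodayAux

namespace LodayAux

section concrete
variable {K : Type} [Field K] {g : Type} [AddCommGroup g] [Module K g]
  {D : Type} [AddCommGroup D] [Module K D]

theorem cext {X : Type} [AddCommGroup X] [Module K X] {k : ℕ}
    {f f' : (g ⊗[K] (⨂[K]^k D)) →ₗ[K] X}
    (h : ∀ (v : g) (hs : Fin k → D), f (v ⊗ₜ[K] tprod K hs) = f' (v ⊗ₜ[K] tprod K hs))
    (x : g ⊗[K] (⨂[K]^k D)) : f x = f' x := by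
  have : f = f' := by
    apply TensorProduct.ext'
    intro v t
    have : (f ∘ₗ TensorProduct.mk K g _ v) = (f' ∘ₗ TensorProduct.mk K g _ v) := by
      apply PiTensorProduct.ext
      ext hs
      exact h v hs
    exact LinearMap.congr_fun this t
  rw [this]

/-- the concrete tower -/
noncomputable def ce (K g D : Type) [Field K] [AddCommGroup g] [Module K g]
    [AddCommGroup D] [Module K D] (k : ℕ) :
    ((g ⊗[K] (⨂[K]^k D)) ⊗[K] D) ≃ₗ[K] (g ⊗[K] (⨂[K]^(k+1) D)) :=
  (TensorProduct.assoc K g (⨂[K]^k D) D).trans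
    (LinearEquiv.lTensor g
      ((LinearEquiv.lTensor (⨂[K]^k D)
        (PiTensorProduct.subsingletonEquiv (R := K) (s := fun _ : Fin 1 => D) (0 : Fin 1)).symm).trans
        (TensorPower.mulEquiv (R := K) (M := D) (n := k) (m := 1))))

theorem app_ce (k : ℕ) (v : g) (hs : Fin k → D) (h : D) :
    app (ce K g D) k (v ⊗ₜ[K] tprod K hs) h = v ⊗ₜ[K] tprod K (Fin.snoc hs h : Fin (k+1) → D) := by
  have h1 : (PiTensorProduct.subsingletonEquiv (R := K) (s := fun _ : Fin 1 => D) (0 : Fin 1)).symm h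
      = tprod K (fun _ : Fin 1 => h) := subsingletonEquiv_symm_apply' _ _
  have h2 := TensorPower.tprod_mul_tprod K hs (fun _ : Fin 1 => h)
  rw [TensorPower.gMul_def] at h2
  simp only [app, ce, LinearMap.compr₂_apply, TensorProduct.mk_apply, LinearEquiv.coe_coe,
    LinearEquiv.trans_apply, TensorProduct.assoc_tmul, LinearEquiv.lTensor_tmul, h1]
  rw [h2]
  congr 2
  rw [Fin.append_right_eq_snoc]

noncomputable def cth (ωr : g →ₗ[K] D →ₗ[K] g) :
    (g ⊗[K] (⨂[K]^0 D)) →ₗ[K] D →ₗ[K] (g ⊗[K] (⨂[K]^0 D)) :=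
  (LinearMap.mk₂ K (fun h x => LinearMap.rTensor (⨂[K]^0 D) (ωr.flip h) x)
    (by intros; simp [LinearMap.rTensor_add]) (by intros; simp [LinearMap.rTensor_smul]) (by intros; simp)
    (by intros; simp)).flip

@[simp] theorem cth_tmul (ωr : g →ₗ[K] D →ₗ[K] g) (v : g) (t : ⨂[K]^0 D) (h : D) :
    cth ωr (v ⊗ₜ t) h = (ωr v h) ⊗ₜ t := by
  simp [cth]

theorem ta_formula (ωr : g →ₗ[K] D →ₗ[K] g) (br : D →ₗ[K] D →ₗ[K] D) (k : ℕ) (v : g)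
    (hs : Fin k → D) (h : D) :
    ta (C := fun k => g ⊗[K] (⨂[K]^k D)) (ce K g D) (cth ωr) br k (v ⊗ₜ[K] tprod K hs) h
      = - ((ωr v h) ⊗ₜ[K] tprod K hs)
        + ∑ i, v ⊗ₜ[K] tprod K (Function.update hs i (br (hs i) h)) := by
  induction k with
  | zero => simp
  | succ k ih =>
    obtain ⟨hs', h', rfl⟩ : ∃ (hs' : Fin k → D) (h' : D), hs = (Fin.snoc hs' h' : Fin (k+1) → D) :=
      ⟨fun i => hs i.castSucc, hs (Fin.last k), by
        funext i; refine Fin.lastCases ?_ (fun i => ?_) i <;> simp⟩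
    rw [← app_ce, ta_app, ih, Fin.sum_univ_castSucc]
    simp only [Fin.snoc_castSucc, Fin.snoc_last, map_add, LinearMap.add_apply, map_neg,
      LinearMap.neg_apply, map_sum, LinearMap.sum_apply, app_ce, Fin.snoc_update, Fin.update_snoc_last]
    abel

variable (ωr : g →ₗ[K] D →ₗ[K] g) (br : D →ₗ[K] D →ₗ[K] D)
  (d : ∀ k : ℕ, (g ⊗[K] (⨂[K]^(k+1) D)) →ₗ[K] (g ⊗[K] (⨂[K]^k D)))

theorem conc_d0
  (hd : ∀ (k : ℕ) (v : g) (hs : Fin (k+1) → D),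
      d k (v ⊗ₜ[K] tprod K hs)
        = (∑ j : Fin (k+1), ((-1 : K)^((j : ℕ)+1)) •
            ((ωr v (hs j)) ⊗ₜ[K] tprod K (fun t => hs (j.succAbove t))))
        + ∑ j : Fin (k+1), ∑ i ∈ Finset.univ.filter (fun i : Fin (k+1) => i < j),
            ((-1 : K)^((j : ℕ))) •
              (v ⊗ₜ[K] tprod K
                (fun t => Function.update hs i (br (hs i) (hs j)) (j.succAbove t))))
    (v : g ⊗[K] (⨂[K]^0 D)) (h : D) :
    d 0 (app (C := fun k => g ⊗[K] (⨂[K]^k D)) (ce K g D) 0 v h)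
      = ta (C := fun k => g ⊗[K] (⨂[K]^k D)) (ce K g D) (cth ωr) br 0 v h := by
  refine cext (f := d 0 ∘ₗ (app (C := fun k => g ⊗[K] (⨂[K]^k D)) (ce K g D) 0).flip h)
    (f' := (ta (C := fun k => g ⊗[K] (⨂[K]^k D)) (ce K g D) (cth ωr) br 0).flip h) ?_ v
  intro v hs
  simp only [LinearMap.comp_apply, LinearMap.flip_apply]
  rw [app_ce, hd, ta_formula]
  have hlt : ∀ i : Fin 1, ¬ (i < 0) := fun i => by simp
  simp [Finset.filter_false_of_mem, Fin.snoc]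
  congr 2
  exact Subsingleton.elim _ _

theorem conc_dS
  (hd : ∀ (k : ℕ) (v : g) (hs : Fin (k+1) → D),
      d k (v ⊗ₜ[K] tprod K hs)
        = (∑ j : Fin (k+1), ((-1 : K)^((j : ℕ)+1)) •
            ((ωr v (hs j)) ⊗ₜ[K] tprod K (fun t => hs (j.succAbove t))))
        + ∑ j : Fin (k+1), ∑ i ∈ Finset.univ.filter (fun i : Fin (k+1) => i < j),
            ((-1 : K)^((j : ℕ))) •
              (v ⊗ₜ[K] tprod K
                (fun t => Function.update hs i (br (hs i) (hs j)) (j.succAbove t))))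
    (k : ℕ) (x : g ⊗[K] (⨂[K]^(k+1) D)) (h : D) :
    d (k+1) (app (C := fun k => g ⊗[K] (⨂[K]^k D)) (ce K g D) (k+1) x h)
      = app (C := fun k => g ⊗[K] (⨂[K]^k D)) (ce K g D) k (d k x) h
        + (-1 : K)^(k+1) • ta (C := fun k => g ⊗[K] (⨂[K]^k D)) (ce K g D) (cth ωr) br (k+1) x h := by
  refine cext (f := d (k+1) ∘ₗ (app (C := fun k => g ⊗[K] (⨂[K]^k D)) (ce K g D) (k+1)).flip h)
    (f' := (app (C := fun k => g ⊗[K] (⨂[K]^k D)) (ce K g D) k).flip h ∘ₗ d k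
      + (-1 : K)^(k+1) • (ta (C := fun k => g ⊗[K] (⨂[K]^k D)) (ce K g D) (cth ωr) br (k+1)).flip h) ?_ x
  intro v hs
  simp only [LinearMap.comp_apply, LinearMap.flip_apply, LinearMap.add_apply, LinearMap.smul_apply]
  rw [app_ce, hd, ta_formula, hd]
  have e1 : ∀ (j : Fin (k+1)) (f : Fin (k+1) → D),
      (fun t => (Fin.snoc f h : Fin (k+2) → D) (j.castSucc.succAbove t))
        = (Fin.snoc (fun t => f (j.succAbove t)) h : Fin (k+1) → D) := by
    intro j f
    funext t
    refine Fin.lastCases ?_ (fun t => ?_) t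
    · rw [Fin.succAbove_castSucc_of_le j (Fin.last k) (Fin.le_last _)]; simp
    · rw [Fin.castSucc_succAbove_castSucc]; simp
  rw [Fin.sum_univ_castSucc]
  rw [Fin.sum_univ_castSucc (n := k+1)]
  simp only [Finset.sum_filter]
  simp only [Fin.sum_univ_castSucc (n := k+1)]
  simp only [Fin.snoc_castSucc, Fin.snoc_last, Fin.castSucc_lt_castSucc_iff, Fin.castSucc_lt_last,
    lt_irrefl, if_false, if_true, ← Fin.snoc_update, e1, Fin.succAbove_last, not_lt_of_gt (Fin.castSucc_lt_last _), add_zero,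
    Fin.val_castSucc, Fin.val_last]
  simp only [map_add, LinearMap.add_apply, map_sum, LinearMap.sum_apply, map_smul, LinearMap.smul_apply,
    app_ce, smul_add, Finset.smul_sum, smul_neg]
  have e2 : ∀ (p : Prop) [Decidable p] b,
      (app (C := fun k => g ⊗[K] (⨂[K]^k D)) (ce K g D) k) (if p then b else 0) h
     = if p then (app (C := fun k => g ⊗[K] (⨂[K]^k D)) (ce K g D) k) b h else 0 := by
    intro p _ b; split_ifs <;> simp
  simp only [e2, map_smul, LinearMap.smul_apply, app_ce]
  rw [pow_succ (-1 : K) (k+1)]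
  module
end concrete
end LodayAux

namespace LodayAux
section fil
variable {K : Type} [Field K] {g : Type} [AddCommGroup g] [Module K g] {m : ℕ}

theorem text {X : Type} [AddCommGroup X] [Module K X]
    {f f' : (⨂[K]^m g) →ₗ[K] X} (h : ∀ a : Fin m → g, f (tprod K a) = f' (tprod K a))
    (x : ⨂[K]^m g) : f x = f' x := by
  have : f = f' := by
    apply PiTensorProduct.ext
    ext a
    exact h a
  rw [this]

/-- projection from the tensor power to the exterior power -/
noncomputable def cpi (K g : Type) [Field K] [AddCommGroup g] [Module K g] (m : ℕ) :
    (⨂[K]^m g) →ₗ[K] ⋀[K]^m g :=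
  PiTensorProduct.lift (exteriorPower.ιMulti K m (M := g)).toMultilinearMap

theorem cpi_tprod (a : Fin m → g) : cpi K g m (tprod K a) = wedge K a := by
  simp only [cpi, PiTensorProduct.lift.tprod]
  rfl

theorem cpi_surj : LinearMap.range (cpi K g m) = ⊤ := by
  rw [eq_top_iff, ← exteriorPower.ιMulti_span K m g, Submodule.span_le]
  rintro _ ⟨a, rfl⟩
  exact ⟨tprod K a, cpi_tprod a⟩

theorem om_gen (br : MultilinearMap K (fun _ : Fin (m+1) => g) g)
    (ω₁ : (⨂[K]^m g) →ₗ[K] (⨂[K]^m g) →ₗ[K] (⨂[K]^m g))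
    (hω₁ : ∀ a b : Fin m → g,
      ω₁ (tprod K a) (tprod K b)
        = ∑ i : Fin m, tprod K (Function.update a i (br (Fin.cons (a i) b))))
    (ωrD : g →ₗ[K] (⨂[K]^m g) →ₗ[K] g)
    (hωrD : ∀ (x : g) (a : Fin m → g), ωrD x (tprod K a) = br (Fin.cons x a))
    (a : Fin m → g) (b : ⨂[K]^m g) :
    ω₁ (tprod K a) b = ∑ i : Fin m, tprod K (Function.update a i (ωrD (a i) b)) := by
  have := text (f := ω₁ (tprod K a))
    (f' := ∑ i : Fin m, ((PiTensorProduct.tprod K : MultilinearMap K (fun _ : Fin m => g) _).toLinearMap a i) ∘ₗ (ωrD (a i))) (by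
      intro b
      simp [hω₁, hωrD]) b
  simpa using this

theorem om_theta (br : MultilinearMap K (fun _ : Fin (m+1) => g) g)
    (fund : ∀ (x : Fin (m+1) → g) (y : Fin m → g),
      br (Fin.cons (br x) y)
        = ∑ i : Fin (m+1), br (Function.update x i (br (Fin.cons (x i) y))))
    (ω₁ : (⨂[K]^m g) →ₗ[K] (⨂[K]^m g) →ₗ[K] (⨂[K]^m g))
    (hω₁ : ∀ a b : Fin m → g,
      ω₁ (tprod K a) (tprod K b)
        = ∑ i : Fin m, tprod K (Function.update a i (br (Fin.cons (a i) b))))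
    (ωrD : g →ₗ[K] (⨂[K]^m g) →ₗ[K] g)
    (hωrD : ∀ (x : g) (a : Fin m → g), ωrD x (tprod K a) = br (Fin.cons x a))
    (v : g) (a b : ⨂[K]^m g) :
    ωrD v (ω₁ a b) = ωrD (ωrD v a) b - ωrD (ωrD v b) a := by
  refine text (f := ωrD v ∘ₗ ω₁.flip b) (f' := ωrD.flip b ∘ₗ ωrD v - ωrD (ωrD v b)) ?_ a
  intro a
  refine text (f := ωrD v ∘ₗ ω₁ (tprod K a))
    (f' := ωrD (ωrD v (tprod K a)) - ωrD.flip (tprod K a) ∘ₗ ωrD v) ?_ b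
  intro b
  have h := fund (Fin.cons v a) b
  rw [Fin.sum_univ_succ] at h
  simp only [Fin.cons_zero, Fin.cons_succ, Fin.update_cons_zero, ← Fin.cons_update] at h
  simp only [LinearMap.comp_apply, LinearMap.sub_apply, LinearMap.flip_apply, hω₁, hωrD, map_sum, h]
  abel

theorem om_leib (ω₁ : (⨂[K]^m g) →ₗ[K] (⨂[K]^m g) →ₗ[K] (⨂[K]^m g))
    (ωrD : g →ₗ[K] (⨂[K]^m g) →ₗ[K] g)
    (hg : ∀ (a : Fin m → g) (b : ⨂[K]^m g),
      ω₁ (tprod K a) b = ∑ i : Fin m, tprod K (Function.update a i (ωrD (a i) b)))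
    (ht : ∀ (v : g) (a b : ⨂[K]^m g), ωrD v (ω₁ a b) = ωrD (ωrD v a) b - ωrD (ωrD v b) a)
    (x a b : ⨂[K]^m g) :
    ω₁ x (ω₁ a b) = ω₁ (ω₁ x a) b - ω₁ (ω₁ x b) a := by
  refine text (f := ω₁.flip (ω₁ a b))
    (f' := ω₁.flip b ∘ₗ ω₁.flip a - ω₁.flip a ∘ₗ ω₁.flip b) ?_ x
  intro c
  simp only [LinearMap.comp_apply, LinearMap.sub_apply, LinearMap.flip_apply]
  let F : (⨂[K]^m g) → (⨂[K]^m g) → Fin m → Fin m → (⨂[K]^m g) := fun a b i j =>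
    if i = j then 0 else
      tprod K (Function.update (Function.update c i (ωrD (c i) a)) j (ωrD (c j) b))
  have key : ∀ a b, ω₁ (ω₁ (tprod K c) a) b
      = ∑ i, tprod K (Function.update c i (ωrD (ωrD (c i) a) b)) + ∑ i, ∑ j, F a b i j := by
    intro a b
    rw [hg c a, map_sum, LinearMap.sum_apply, ← Finset.sum_add_distrib]
    refine Finset.sum_congr rfl fun i _ => ?_
    rw [hg, ← Finset.add_sum_erase _ _ (Finset.mem_univ i),
      ← Finset.add_sum_erase (a := i) _ (fun j => F a b i j) (Finset.mem_univ i)]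
    have e1 : F a b i i = 0 := by simp [F]
    rw [e1, zero_add]
    congr 1
    · simp
    · refine Finset.sum_congr rfl fun j hj => ?_
      have hne : j ≠ i := (Finset.mem_erase.1 hj).1
      simp [F, hne, hne.symm]
  have sw : ∑ i, ∑ j, F a b i j = ∑ i, ∑ j, F b a i j := by
    rw [Finset.sum_comm]
    refine Finset.sum_congr rfl fun i _ => Finset.sum_congr rfl fun j _ => ?_
    by_cases hij : i = j
    · simp [F, hij]
    · simp only [F, hij, Ne.symm hij, if_false]
      rw [Function.update_comm hij]
  rw [key, key, sw, hg]
  simp only [ht, MultilinearMap.map_update_sub, Finset.sum_sub_distrib]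
  abel

theorem om_pi (br : MultilinearMap K (fun _ : Fin (m+1) => g) g)
    (ω₁ : (⨂[K]^m g) →ₗ[K] (⨂[K]^m g) →ₗ[K] (⨂[K]^m g))
    (hω₁ : ∀ a b : Fin m → g,
      ω₁ (tprod K a) (tprod K b)
        = ∑ i : Fin m, tprod K (Function.update a i (br (Fin.cons (a i) b))))
    (ω₀bar : (⋀[K]^m g) →ₗ[K] (⋀[K]^m g) →ₗ[K] (⋀[K]^m g))
    (hω₀bar : ∀ a b : Fin m → g,
      ω₀bar (wedge K a) (wedge K b)
        = ∑ i : Fin m, wedge K (Function.update a i (br (Fin.cons (a i) b))))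
    (a b : ⨂[K]^m g) :
    cpi K g m (ω₁ a b) = ω₀bar (cpi K g m a) (cpi K g m b) := by
  refine text (f := cpi K g m ∘ₗ ω₁.flip b) (f' := ω₀bar.flip (cpi K g m b) ∘ₗ cpi K g m) ?_ a
  intro a
  refine text (f := cpi K g m ∘ₗ ω₁ (tprod K a)) (f' := ω₀bar (cpi K g m (tprod K a)) ∘ₗ cpi K g m) ?_ b
  intro b
  simp only [LinearMap.comp_apply, hω₁, cpi_tprod, hω₀bar, map_sum]

theorem r_pi (br : MultilinearMap K (fun _ : Fin (m+1) => g) g)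
    (ωrD : g →ₗ[K] (⨂[K]^m g) →ₗ[K] g)
    (hωrD : ∀ (x : g) (a : Fin m → g), ωrD x (tprod K a) = br (Fin.cons x a))
    (ωrL : g →ₗ[K] (⋀[K]^m g) →ₗ[K] g)
    (hωrL : ∀ (x : g) (a : Fin m → g), ωrL x (wedge K a) = br (Fin.cons x a))
    (v : g) (a : ⨂[K]^m g) : ωrD v a = ωrL v (cpi K g m a) := by
  refine text (f := ωrD v) (f' := ωrL v ∘ₗ cpi K g m) ?_ a
  intro a
  simp only [LinearMap.comp_apply, hωrD, cpi_tprod, hωrL]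

end fil

section fin
variable {K : Type} [Field K] {C : ℕ → Type} [∀ k, AddCommGroup (C k)]
    [∀ k, Module K (C k)] (d : ∀ k, C (k+1) →ₗ[K] C k)

theorem acyc_iff (k : ℕ) : Subsingleton (homologyC K C d k) ↔ Acyc d k := by
  have : Subsingleton (homologyC K C d k) ↔ boundariesC K C d k = ⊤ :=
    Submodule.Quotient.subsingleton_iff
  rw [this, eq_top_iff]
  cases k with
  | zero =>
    constructor
    · intro h x
      exact h (x := ⟨x, Submodule.mem_top⟩) Submodule.mem_top
    · rintro h ⟨x, hx⟩ -
      exact h x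
  | succ k =>
    constructor
    · intro h x hx
      exact h (x := ⟨x, hx⟩) Submodule.mem_top
    · rintro h ⟨x, hx⟩ -
      exact h x hx
end fin

section maps
variable {K : Type} [Field K] (g : Type) [AddCommGroup g] [Module K g]
  {D L : Type} [AddCommGroup D] [Module K D] [AddCommGroup L] [Module K L]

/-- functoriality of the tower in the letters -/
noncomputable def cmap (π : D →ₗ[K] L) (k : ℕ) : (g ⊗[K] (⨂[K]^k D)) →ₗ[K] (g ⊗[K] (⨂[K]^k L)) :=
  LinearMap.lTensor g (PiTensorProduct.map (fun _ => π))

theorem cmap_tprod (π : D →ₗ[K] L) (k : ℕ) (v : g) (hs : Fin k → D) :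
    cmap g π k (v ⊗ₜ[K] tprod K hs) = v ⊗ₜ[K] tprod K (fun i => π (hs i)) := by
  simp [cmap, PiTensorProduct.map_tprod]

theorem cmap_app (π : D →ₗ[K] L) (k : ℕ) (x : g ⊗[K] (⨂[K]^k D)) (h : D) :
    cmap g π (k+1) (app (C := fun k => g ⊗[K] (⨂[K]^k D)) (ce K g D) k x h)
      = app (C := fun k => g ⊗[K] (⨂[K]^k L)) (ce K g L) k (cmap g π k x) (π h) := by
  refine cext (f := cmap g π (k+1) ∘ₗ (app (C := fun k => g ⊗[K] (⨂[K]^k D)) (ce K g D) k).flip h)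
    (f' := (app (C := fun k => g ⊗[K] (⨂[K]^k L)) (ce K g L) k).flip (π h) ∘ₗ cmap g π k) ?_ x
  intro v hs
  simp only [LinearMap.comp_apply, LinearMap.flip_apply, app_ce, cmap_tprod]
  congr 2
  funext i
  refine Fin.lastCases ?_ (fun i => ?_) i <;> simp

theorem cmap_zero (π : D →ₗ[K] L) (s : L →ₗ[K] D) (x : g ⊗[K] (⨂[K]^0 D)) :
    cmap g s 0 (cmap g π 0 x) = x := by
  refine cext (f := cmap g s 0 ∘ₗ cmap g π 0) (f' := LinearMap.id) ?_ x
  intro v hs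
  simp only [LinearMap.comp_apply, cmap_tprod, LinearMap.id_apply]
  congr 2
  exact Subsingleton.elim _ _

end maps
end LodayAux

/-- Let `g` be an `n`-Filippov algebra over a field `K` of characteristic
`≠ 2`, with `n > 2` (write `n = m+1`, `2 ≤ m`) and `dim_K g ≥ n`.  If `ₙH^Lie_k(g;K) = 0`
for all `k ≥ 0`, then `ₙHL_k(g;K) = 0` for all `k ≥ 0`.  Here `ₙHL_*(g;K)` is the homology of
the Loday complex `CL_*(Dₙ(g), g)` and `ₙH^Lie_*(g;K)` that of `CL_*(Lₙ(g), g)`. -/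
theorem statement14 (K : Type) [Field K] (hchar : ringChar K ≠ 2)
    (g : Type) [AddCommGroup g] [Module K g] (m : ℕ) (hm : 2 ≤ m)
    (hdim : ((m + 1 : ℕ) : Cardinal) ≤ Module.rank K g)
    (br : MultilinearMap K (fun _ : Fin (m+1) => g) g)
    (fund : ∀ (x : Fin (m+1) → g) (y : Fin m → g),
      br (Fin.cons (br x) y)
        = ∑ i : Fin (m+1), br (Function.update x i (br (Fin.cons (x i) y))))
    (alt : ∀ (x : Fin (m+1) → g) (i j : Fin (m+1)), i ≠ j → x i = x j → br x = 0)
    -- the Leibniz brackets ω₁ on Dₙ(g) and ω̄₀ on Lₙ(g)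
    (ω₁ : (⨂[K]^m g) →ₗ[K] (⨂[K]^m g) →ₗ[K] (⨂[K]^m g))
    (hω₁ : ∀ a b : Fin m → g,
      ω₁ (tprod K a) (tprod K b)
        = ∑ i : Fin m, tprod K (Function.update a i (br (Fin.cons (a i) b))))
    (ω₀bar : (⋀[K]^m g) →ₗ[K] (⋀[K]^m g) →ₗ[K] (⋀[K]^m g))
    (hω₀bar : ∀ a b : Fin m → g,
      ω₀bar (wedge K a) (wedge K b)
        = ∑ i : Fin m, wedge K (Function.update a i (br (Fin.cons (a i) b))))
    -- the right co-representation actions of Dₙ(g) and Lₙ(g) on g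
    (ωrD : g →ₗ[K] (⨂[K]^m g) →ₗ[K] g)
    (hωrD : ∀ (x : g) (a : Fin m → g), ωrD x (tprod K a) = br (Fin.cons x a))
    (ωrL : g →ₗ[K] (⋀[K]^m g) →ₗ[K] g)
    (hωrL : ∀ (x : g) (a : Fin m → g), ωrL x (wedge K a) = br (Fin.cons x a))
    -- the Loday boundary of ₙCL_*(g) = CL_*(Dₙ(g), g)
    (dD : ∀ k : ℕ, (g ⊗[K] (⨂[K]^(k+1) (⨂[K]^m g))) →ₗ[K] (g ⊗[K] (⨂[K]^k (⨂[K]^m g))))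
    (hdD : ∀ (k : ℕ) (v : g) (hs : Fin (k+1) → (⨂[K]^m g)),
      dD k (v ⊗ₜ[K] tprod K hs)
        = (∑ j : Fin (k+1), ((-1 : K)^((j : ℕ)+1)) •
            ((ωrD v (hs j)) ⊗ₜ[K] tprod K (fun t => hs (j.succAbove t))))
        + ∑ j : Fin (k+1), ∑ i ∈ Finset.univ.filter (fun i : Fin (k+1) => i < j),
            ((-1 : K)^((j : ℕ))) •
              (v ⊗ₜ[K] tprod K
                (fun t => Function.update hs i (ω₁ (hs i) (hs j)) (j.succAbove t))))
    -- the Loday boundary of ₙC_*(g) = CL_*(Lₙ(g), g)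
    (dL : ∀ k : ℕ, (g ⊗[K] (⨂[K]^(k+1) (⋀[K]^m g))) →ₗ[K] (g ⊗[K] (⨂[K]^k (⋀[K]^m g))))
    (hdL : ∀ (k : ℕ) (v : g) (hs : Fin (k+1) → (⋀[K]^m g)),
      dL k (v ⊗ₜ[K] tprod K hs)
        = (∑ j : Fin (k+1), ((-1 : K)^((j : ℕ)+1)) •
            ((ωrL v (hs j)) ⊗ₜ[K] tprod K (fun t => hs (j.succAbove t))))
        + ∑ j : Fin (k+1), ∑ i ∈ Finset.univ.filter (fun i : Fin (k+1) => i < j),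
            ((-1 : K)^((j : ℕ))) •
              (v ⊗ₜ[K] tprod K
                (fun t => Function.update hs i (ω₀bar (hs i) (hs j)) (j.succAbove t)))) :
    (∀ k : ℕ,
        Subsingleton (homologyC K (fun k => g ⊗[K] (⨂[K]^k (⋀[K]^m g))) dL k)) →
    ∀ k : ℕ,
      Subsingleton (homologyC K (fun k => g ⊗[K] (⨂[K]^k (⨂[K]^m g))) dD k) := by
  intro hL
  have h2 : (2 : K) ≠ 0 := Ring.two_ne_zero hchar
  obtain ⟨s, hs⟩ := (LodayAux.cpi K g m).exists_rightInverse_of_surjective LodayAux.cpi_surj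
  have hs' : ∀ l, LodayAux.cpi K g m (s l) = l := fun l => LinearMap.congr_fun hs l
  have hgen := LodayAux.om_gen br ω₁ hω₁ ωrD hωrD
  have hth := LodayAux.om_theta br fund ω₁ hω₁ ωrD hωrD
  have hlb := LodayAux.om_leib ω₁ ωrD hgen hth
  have hpi := LodayAux.om_pi br ω₁ hω₁ ω₀bar hω₀bar
  have hr := LodayAux.r_pi br ωrD hωrD ωrL hωrL
  have hL1 := fun k =>
    (LodayAux.acyc_iff (C := fun k => g ⊗[K] (⨂[K]^k (⋀[K]^m g))) dL k).1 (hL k)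
  intro k
  refine (LodayAux.acyc_iff (C := fun k => g ⊗[K] (⨂[K]^k (⨂[K]^m g))) dD k).2 ?_
  refine LodayAux.acyc_main (C := fun k => g ⊗[K] (⨂[K]^k (⨂[K]^m g)))
    (C' := fun k => g ⊗[K] (⨂[K]^k (⋀[K]^m g)))
    (LodayAux.ce K g (⨂[K]^m g)) (LodayAux.cth ωrD) ω₁ dD
    (LodayAux.ce K g (⋀[K]^m g)) (LodayAux.cth ωrL) dL (LodayAux.cpi K g m) s
    (LodayAux.cmap g (LodayAux.cpi K g m)) (LodayAux.cmap g s)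
    h2 ?_ hlb ?_ ?_ ?_ (LodayAux.conc_d0 ωrD ω₁ dD hdD) (LodayAux.conc_dS ωrD ω₁ dD hdD) hs'
    (LodayAux.cmap_zero g _ _) (LodayAux.cmap_zero g _ _)
    (LodayAux.cmap_app g _) (LodayAux.cmap_app g _) ?_ ?_ hL1 k
  · intro v a b
    refine LodayAux.cext (f := (LodayAux.cth ωrD).flip (ω₁ a b))
      (f' := (LodayAux.cth ωrD).flip b ∘ₗ (LodayAux.cth ωrD).flip a
        - (LodayAux.cth ωrD).flip a ∘ₗ (LodayAux.cth ωrD).flip b) ?_ v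
    intro v t
    simp only [LinearMap.flip_apply, LinearMap.comp_apply, LinearMap.sub_apply, LodayAux.cth_tmul,
      hth, TensorProduct.sub_tmul]
  · intro i h hi
    rw [hpi, hi]; simp
  · intro v i hi
    refine LodayAux.cext (f := (LodayAux.cth ωrD).flip i) (f' := 0) ?_ v
    intro v t
    simp [hr, hi]
  · intro x i hi
    refine LodayAux.text (f := ω₁.flip i) (f' := 0) ?_ x
    intro a
    simp only [LinearMap.flip_apply, LinearMap.zero_apply]
    rw [hgen]
    refine Finset.sum_eq_zero fun j _ => ?_
    rw [hr, hi, map_zero]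
    exact MultilinearMap.map_update_zero _ _ _
  · intro v l
    refine LodayAux.cext (f := (LodayAux.cth ωrD).flip (s l) ∘ₗ LodayAux.cmap g s 0)
      (f' := LodayAux.cmap g s 0 ∘ₗ (LodayAux.cth ωrL).flip l) ?_ v
    intro v t
    simp only [LinearMap.flip_apply, LinearMap.comp_apply, LodayAux.cth_tmul,
      LodayAux.cmap_tprod, hr, hs']
  · intro k x
    refine LodayAux.cext (f := LodayAux.cmap g (LodayAux.cpi K g m) k ∘ₗ dD k)
      (f' := dL k ∘ₗ LodayAux.cmap g (LodayAux.cpi K g m) (k+1)) ?_ x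
    intro v t
    have hu : ∀ (i : Fin (k+1)) (z : ⨂[K]^m g) (j : Fin (k+1)),
        LodayAux.cpi K g m (Function.update t i z j)
          = Function.update (fun i => LodayAux.cpi K g m (t i)) i (LodayAux.cpi K g m z) j := by
      intro i z j
      by_cases h : j = i
      · subst h; simp
      · simp [h]
    simp only [LinearMap.comp_apply, LodayAux.cmap_tprod, hdD, hdL, map_add, map_sum, map_smul,
      hr, hu, hpi]
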